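/- For every integer m ≥ 1, the quantum Gelfand invariant tr_q M^m = tr(D·M^m) belongs to the center of the quantized enveloping algebra U_q(gl_n); that is, it commutes with every element of U_q(gl_n). -/

import Mathlib

open Matrix

noncomputable section

/-- The `R`-matrix of `U_q(gl_n)` as an `n²×n²` matrix. -/
def Rmat (q : ℂ) (n : ℕ) : Matrix (Fin n × Fin n) (Fin n × Fin n) ℂ :=
  fun p r =>
    (if p = r then (if p.1 = p.2 then q else 1) else 0) +
      (if r.1 = p.2 ∧ r.2 = p.1 ∧ p.1 < p.2 then q - q⁻¹ else 0)

/-- Generators of `U_q(gl_n)`: a sign (`true` for `+`) and a pair of indices. -/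
abbrev GenGL (n : ℕ) := Bool × Fin n × Fin n

/-- The generator `l^±_{ij}` in the free algebra. -/
def gl (n : ℕ) (p : Bool) (i j : Fin n) : FreeAlgebra ℂ (GenGL n) :=
  FreeAlgebra.ι ℂ (p, i, j)

/-- Embedding of an `n×n` matrix into the first tensor leg of `End(ℂ^n)⊗End(ℂ^n)`. -/
def leg1 {n : ℕ} {A : Type*} [Semiring A] (m : Fin n → Fin n → A) :
    Matrix (Fin n × Fin n) (Fin n × Fin n) A :=
  fun v w => if v.2 = w.2 then m v.1 w.1 else 0

/-- Embedding of an `n×n` matrix into the second tensor leg of `End(ℂ^n)⊗End(ℂ^n)`. -/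
def leg2 {n : ℕ} {A : Type*} [Semiring A] (m : Fin n → Fin n → A) :
    Matrix (Fin n × Fin n) (Fin n × Fin n) A :=
  fun v w => if v.1 = w.1 then m v.2 w.2 else 0

/-- The `R`-matrix with entries in the free algebra. -/
def RcGL (q : ℂ) (n : ℕ) : Matrix (Fin n × Fin n) (Fin n × Fin n) (FreeAlgebra ℂ (GenGL n)) :=
  (Rmat q n).map (algebraMap ℂ (FreeAlgebra ℂ (GenGL n)))

/-- The defining relations of `U_q(gl_n)` in its `RTT` presentation. -/
inductive relGL (q : ℂ) (n : ℕ) :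
    FreeAlgebra ℂ (GenGL n) → FreeAlgebra ℂ (GenGL n) → Prop
  | tri_minus {i j : Fin n} : i < j → relGL q n (gl n false i j) 0
  | tri_plus {i j : Fin n} : i < j → relGL q n (gl n true j i) 0
  | diag_mp (i : Fin n) : relGL q n (gl n false i i * gl n true i i) 1
  | diag_pm (i : Fin n) : relGL q n (gl n true i i * gl n false i i) 1
  | rll (p : Bool) (v w : Fin n × Fin n) :
      relGL q n
        ((RcGL q n * leg1 (gl n p) * leg2 (gl n p)) v w)
        ((leg2 (gl n p) * leg1 (gl n p) * RcGL q n) v w)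
  | rll_pm (v w : Fin n × Fin n) :
      relGL q n
        ((RcGL q n * leg1 (gl n true) * leg2 (gl n false)) v w)
        ((leg2 (gl n false) * leg1 (gl n true) * RcGL q n) v w)

/-- The quantized enveloping algebra `U_q(gl_n)` in its `RTT` presentation. -/
abbrev UqGL (q : ℂ) (n : ℕ) := RingQuot (relGL q n)

/-- The generator `l^±_{ij}` of `U_q(gl_n)`. -/
def lG (q : ℂ) (n : ℕ) (p : Bool) (i j : Fin n) : UqGL q n :=
  RingQuot.mkAlgHom ℂ (relGL q n) (gl n p i j)

/-- The generator matrix `L^± = [l^±_{ij}]`. -/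
def LM (q : ℂ) (n : ℕ) (p : Bool) : Matrix (Fin n) (Fin n) (UqGL q n) :=
  fun i j => lG q n p i j

/-- The diagonal matrix `D = diag(q^{n−1}, q^{n−3}, …, q^{−n+1})` over `A`. -/
def Dmat (q : ℂ) (n : ℕ) (A : Type*) [Ring A] [Algebra ℂ A] : Matrix (Fin n) (Fin n) A :=
  Matrix.diagonal fun i => algebraMap ℂ A (q ^ ((n : ℤ) - 1 - 2 * (i : ℤ)))

/-- The inverse diagonal matrix `D⁻¹`. -/
def Dmatinv (q : ℂ) (n : ℕ) (A : Type*) [Ring A] [Algebra ℂ A] : Matrix (Fin n) (Fin n) A :=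
  Matrix.diagonal fun i => algebraMap ℂ A (q ^ (-((n : ℤ) - 1 - 2 * (i : ℤ))))

/-- Quantum trace `tr_q X = tr(D X)`. -/
def trq {n : ℕ} {A : Type*} [Ring A] [Algebra ℂ A] (q : ℂ) (X : Matrix (Fin n) (Fin n) A) : A :=
  Matrix.trace (Dmat q n A * X)

/-- The `q`-number `[k]_q`. -/
def qint (q : ℂ) (k : ℤ) : ℂ := (q ^ k - q ^ (-k)) / (q - q⁻¹)

end

lemma aux_telescope (q : ℂ) (hq0 : q ≠ 0) (N : ℤ) (k i : ℕ) (hki : k < i) :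
    (q - q⁻¹) * ∑ x ∈ Finset.Ioo k i, q ^ (N - 2 * (x : ℤ)) =
      q⁻¹ * q ^ (N - 2 * (k : ℤ)) - q * q ^ (N - 2 * (i : ℤ)) := by
  have key : ∀ x : ℕ, q * q ^ (N - 2 * ((x + 1 : ℕ) : ℤ)) = q⁻¹ * q ^ (N - 2 * (x : ℤ)) := by
    intro x
    rw [← zpow_one_add₀ hq0, ← _root_.zpow_neg_one, ← zpow_add₀ hq0]
    congr 1
    push_cast
    ring
  obtain ⟨d, rfl⟩ := Nat.exists_eq_add_of_lt hki
  induction d with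
  | zero =>
    have : Finset.Ioo k (k + 0 + 1) = ∅ := by
      ext x; simp only [Finset.mem_Ioo, Finset.notMem_empty, iff_false]; omega
    rw [this, Finset.sum_empty, mul_zero, key]
    simp
  | succ d ih =>
    have : Finset.Ioo k (k + (d + 1) + 1) = insert (k + d + 1) (Finset.Ioo k (k + d + 1)) := by
      ext x; simp; omega
    rw [this, Finset.sum_insert (by simp), mul_add, ih (by omega), key (k + (d + 1)), show k + (d + 1) = k + d + 1 by omega]
    ring

lemma aux_telescope_fin (q : ℂ) (hq0 : q ≠ 0) (n : ℕ) (N : ℤ) (k i : Fin n) (hki : k < i) :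
    (q - q⁻¹) * ∑ a : Fin n, (if k < a ∧ a < i then q ^ (N - 2 * (a : ℤ)) else 0) =
      q⁻¹ * q ^ (N - 2 * (k : ℤ)) - q * q ^ (N - 2 * (i : ℤ)) := by
  rw [← aux_telescope q hq0 N k i hki]
  congr 1
  have h := Fin.sum_univ_eq_sum_range
    (fun x : ℕ => if (k : ℕ) < x ∧ x < i then q ^ (N - 2 * (x : ℤ)) else 0) n
  simp only [Fin.lt_def]
  rw [h, ← Finset.sum_filter]
  congr 1
  ext x
  simp
  omega

/-- The crucial property of `D`. -/
lemma aux_scalar (q : ℂ) (hq0 : q ≠ 0) (n : ℕ) (N : ℤ) (i k b c : Fin n) :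
    ∑ a : Fin n, ∑ j : Fin n,
      q ^ (N - 2 * (a : ℤ)) * (Rmat q n (a, i) (b, j) * Rmat q⁻¹ n (c, j) (a, k)) =
    if b = c ∧ i = k then q ^ (N - 2 * (b : ℤ)) else 0 := by
  have h1 : ∀ a : Fin n, ∑ j : Fin n,
      q ^ (N - 2 * (a : ℤ)) * (Rmat q n (a, i) (b, j) * Rmat q⁻¹ n (c, j) (a, k)) =
      (if a = b then q ^ (N - 2 * (a : ℤ)) * ((if a = i then q else 1) * Rmat q⁻¹ n (c, i) (a, k)) else 0)
      + (if b = i ∧ a < i then q ^ (N - 2 * (a : ℤ)) * ((q - q⁻¹) * Rmat q⁻¹ n (c, a) (a, k)) else 0) := by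
    intro a
    have : ∀ j : Fin n, q ^ (N - 2 * (a : ℤ)) * (Rmat q n (a, i) (b, j) * Rmat q⁻¹ n (c, j) (a, k))
      = (if i = j then (if a = b then q ^ (N - 2 * (a : ℤ)) * ((if a = i then q else 1) * Rmat q⁻¹ n (c, j) (a, k)) else 0) else 0)
      + (if a = j then (if b = i ∧ a < i then q ^ (N - 2 * (a : ℤ)) * ((q - q⁻¹) * Rmat q⁻¹ n (c, j) (a, k)) else 0) else 0) := by
      intro j
      rw [show Rmat q n (a, i) (b, j) = (if a = b ∧ i = j then (if a = i then q else 1) else 0) +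
        (if b = i ∧ j = a ∧ a < i then q - q⁻¹ else 0) by simp [Rmat]]
      rw [add_mul, mul_add]
      congr 1
      · by_cases h1 : i = j <;> by_cases h2 : a = b <;> simp only [h1, h2, and_self, and_true, and_false, false_and, if_true, if_false, zero_mul, mul_zero]
      · by_cases h1 : j = a
        · by_cases h2 : b = i <;> by_cases h3 : a < i <;> simp only [h1, h2, h3, and_self, and_true, and_false, false_and, if_true, if_false, zero_mul, mul_zero]
        · have h1' : ¬ a = j := fun h => h1 h.symm
          simp only [h1, h1', and_false, false_and, if_false, zero_mul, mul_zero]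
    rw [Finset.sum_congr rfl (fun j _ => this j), Finset.sum_add_distrib]
    simp
  rw [Finset.sum_congr rfl (fun a _ => h1 a), Finset.sum_add_distrib, Finset.sum_ite_eq']
  simp only [Finset.mem_univ, if_true]
  have h2 : ∀ a : Fin n, (if b = i ∧ a < i then
        q ^ (N - 2 * (a : ℤ)) * ((q - q⁻¹) * Rmat q⁻¹ n (c, a) (a, k)) else 0) =
      (if a = k then (if b = i ∧ k = c ∧ k < i then q ^ (N - 2 * (k : ℤ)) * (q - q⁻¹) * q⁻¹ else 0) else 0)
      - (if b = i ∧ k = c then (q - q⁻¹) * ((q - q⁻¹) *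
          (if k < a ∧ a < i then q ^ (N - 2 * (a : ℤ)) else 0)) else 0) := by
    intro a
    rw [show Rmat q⁻¹ n (c, a) (a, k) = (if c = a ∧ a = k then (if c = a then q⁻¹ else 1) else 0) +
        (if k = c ∧ c < a then q⁻¹ - q else 0) by simp [Rmat]]
    by_cases hb : b = i
    · by_cases hc : k = c
      · subst hc
        by_cases hak : a = k
        · subst hak; by_cases hai : a < i <;> simp [hb, hai] <;> ring
        · have : ¬ k = a := fun h => hak h.symm
          by_cases hai : a < i <;> by_cases hka : k < a <;> simp [hb, hai, hak, this, hka]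
          ring
      · have : ¬ (c = a ∧ a = k) := fun h => hc (h.2 ▸ h.1.symm)
        simp [hc, this]
    · simp [hb]
  rw [Finset.sum_congr rfl (fun a _ => h2 a), Finset.sum_sub_distrib, Finset.sum_ite_eq']
  simp only [Finset.mem_univ, if_true]
  rw [show Rmat q⁻¹ n (c, i) (b, k) = (if c = b ∧ i = k then (if c = i then q⁻¹ else 1) else 0) +
        (if b = i ∧ k = c ∧ c < i then q⁻¹ - q else 0) by simp [Rmat]]
  by_cases hbc : b = i ∧ k = c
  · obtain ⟨rfl, rfl⟩ := hbc
    simp only [true_and, and_self, if_true]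
    rw [← Finset.mul_sum, ← Finset.mul_sum]
    by_cases hki : k < b
    · rw [aux_telescope_fin q hq0 n N k b hki]
      have : k ≠ b := ne_of_lt hki
      have : b ≠ k := ne_of_gt hki
      simp [*]
      ring
    · have : ∑ a : Fin n, (if k < a ∧ a < b then q ^ (N - 2 * (a : ℤ)) else 0) = 0 := by
        apply Finset.sum_eq_zero
        intro a _
        rw [if_neg]
        rintro ⟨h1, h2⟩
        exact hki (h1.trans h2)
      rw [this]
      by_cases hkb : k = b
      · subst hkb; simp [hq0]
      · have : b ≠ k := fun h => hkb h.symm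
        simp [*]
  · have h3 : ¬ (b = i ∧ k = c ∧ k < i) := fun h => hbc ⟨h.1, h.2.1⟩
    have h4 : ¬ (b = i ∧ k = c ∧ c < i) := fun h => hbc ⟨h.1, h.2.1⟩
    simp only [hbc, h3, h4, if_false, Finset.sum_const_zero, sub_zero, add_zero]
    by_cases h5 : b = c ∧ i = k
    · obtain ⟨rfl, rfl⟩ := h5
      by_cases hbi : b = i <;> simp [hbi, hq0]
    · have : ¬ (c = b ∧ i = k) := fun h => h5 ⟨h.1.symm, h.2⟩
      simp [h5, this]

lemma aux_Rinv (q : ℂ) (hq0 : q ≠ 0) (n : ℕ) : Rmat q n * Rmat q⁻¹ n = 1 := by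
  ext ⟨i, j⟩ ⟨k, l⟩
  rw [Matrix.mul_apply]
  have : ∀ x : Fin n × Fin n, Rmat q n (i, j) x * Rmat q⁻¹ n x (k, l) =
      (if (i, j) = x then (if i = j then q else 1) * Rmat q⁻¹ n x (k, l) else 0) +
      (if (j, i) = x then (if i < j then (q - q⁻¹) * Rmat q⁻¹ n x (k, l) else 0) else 0) := by
    rintro ⟨x, y⟩
    rw [show Rmat q n (i, j) (x, y) = (if (i, j) = (x, y) then (if i = j then q else 1) else 0) +
        (if (j, i) = (x, y) ∧ i < j then q - q⁻¹ else 0) by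
          simp only [Rmat, Prod.mk.injEq, and_assoc, eq_comm (a := x), eq_comm (a := y)]]
    rw [add_mul]
    congr 1
    · by_cases h1 : (i, j) = (x, y) <;> simp only [h1, if_true, if_false, zero_mul]
    · by_cases h1 : (j, i) = (x, y) <;> by_cases h2 : i < j <;>
        simp only [h1, h2, and_self, and_true, and_false, if_true, if_false, zero_mul]
  rw [Finset.sum_congr rfl (fun x _ => this x), Finset.sum_add_distrib]
  simp only [Finset.sum_ite_eq, Finset.mem_univ, if_true]
  simp only [Rmat, Matrix.one_apply, Prod.mk.injEq, inv_inv]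
  rcases lt_trichotomy i j with h | h | h
  · have h1 : i ≠ j := ne_of_lt h
    have h2 : j ≠ i := ne_of_gt h
    have h3 : ¬ j < i := not_lt_of_gt h
    simp only [h, h1, h2, h3, if_true, if_false, and_true, and_false, add_zero]
    split_ifs <;> first | ring1 | grind
  · subst h
    simp [hq0]
  · have h1 : i ≠ j := ne_of_gt h
    have h3 : ¬ i < j := not_lt_of_gt h
    simp [h1, h3]

section generic

variable {n : ℕ} {A : Type*} [Ring A] [Algebra ℂ A]

lemma aux_leg1_mul (X Y : Matrix (Fin n) (Fin n) A) : leg1 (X * Y) = leg1 X * leg1 Y := by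
  ext ⟨i, j⟩ ⟨k, l⟩
  simp only [leg1, Matrix.mul_apply, Fintype.sum_prod_type]
  by_cases h : j = l <;> simp [h]

lemma aux_leg1_one : leg1 (1 : Matrix (Fin n) (Fin n) A) = 1 := by
  ext ⟨i, j⟩ ⟨k, l⟩
  simp only [leg1, Matrix.one_apply, Prod.mk.injEq]
  split_ifs <;> simp_all

lemma aux_leg1_pow (X : Matrix (Fin n) (Fin n) A) (m : ℕ) : leg1 (X ^ m) = (leg1 X) ^ m := by
  induction m with
  | zero => simp [aux_leg1_one]
  | succ m ih => rw [pow_succ, pow_succ, ← ih]; exact aux_leg1_mul _ _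

/-- partial trace over the first leg, weighted by `D`. -/
noncomputable def auxPtr (q : ℂ) (X : Matrix (Fin n × Fin n) (Fin n × Fin n) A) : Matrix (Fin n) (Fin n) A :=
  fun i k => ∑ a : Fin n, (q ^ ((n : ℤ) - 1 - 2 * (a : ℤ))) • X (a, i) (a, k)

lemma aux_trq (q : ℂ) (Y : Matrix (Fin n) (Fin n) A) :
    trq q Y = ∑ a : Fin n, (q ^ ((n : ℤ) - 1 - 2 * (a : ℤ))) • Y a a := by
  simp [trq, Dmat, Matrix.trace, Matrix.diagonal_mul, Algebra.smul_def]

lemma aux_ptr_mul_leg2 (q : ℂ) (X : Matrix (Fin n × Fin n) (Fin n × Fin n) A)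
    (L : Matrix (Fin n) (Fin n) A) : auxPtr q (X * leg2 L) = auxPtr q X * L := by
  ext i k
  simp only [auxPtr, Matrix.mul_apply, leg2, Fintype.sum_prod_type, mul_ite, mul_zero]
  have : ∀ a : Fin n, (∑ x : Fin n, ∑ y : Fin n, if x = a then X (a, i) (x, y) * L y k else 0) =
      ∑ y : Fin n, X (a, i) (a, y) * L y k := by
    intro a
    rw [Finset.sum_comm]
    simp
  simp only [this, Finset.smul_sum, Finset.sum_mul, smul_mul_assoc]
  rw [Finset.sum_comm]

lemma aux_ptr_leg2_leg1 (q : ℂ) (L Y : Matrix (Fin n) (Fin n) A) (i k : Fin n) :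
    auxPtr q (leg2 L * leg1 Y) i k = L i k * trq q Y := by
  rw [aux_trq]
  simp only [auxPtr, Matrix.mul_apply, leg2, leg1, Fintype.sum_prod_type, mul_ite, mul_zero, ite_mul,
    zero_mul, Finset.mul_sum, mul_smul_comm]
  simp

lemma aux_ptr_conj (q : ℂ) (S T : Matrix (Fin n × Fin n) (Fin n × Fin n) ℂ)
    (hST : ∀ i k b c : Fin n, ∑ a : Fin n, ∑ j : Fin n,
      q ^ ((n : ℤ) - 1 - 2 * (a : ℤ)) * (S (a, i) (b, j) * T (c, j) (a, k)) =
      if b = c ∧ i = k then q ^ ((n : ℤ) - 1 - 2 * (b : ℤ)) else 0)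
    (Y : Matrix (Fin n) (Fin n) A) :
    auxPtr q (S.map (algebraMap ℂ A) * leg1 Y * T.map (algebraMap ℂ A)) =
      Matrix.diagonal (fun _ => trq q Y) := by
  ext i k
  have h1 : ∀ a : Fin n, (S.map (algebraMap ℂ A) * leg1 Y * T.map (algebraMap ℂ A)) (a, i) (a, k) =
      ∑ b : Fin n, ∑ c : Fin n, ∑ j : Fin n, (S (a, i) (b, j) * T (c, j) (a, k)) • Y b c := by
    intro a
    simp only [Matrix.mul_apply, leg1, Fintype.sum_prod_type, mul_ite, mul_zero, Matrix.map_apply,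
      Finset.sum_mul, ite_mul, zero_mul]
    simp only [Finset.sum_ite_eq', Finset.sum_ite_eq, Finset.mem_univ, if_true]
    have h2 : ∀ b c j : Fin n, algebraMap ℂ A (S (a, i) (b, j)) * Y b c * algebraMap ℂ A (T (c, j) (a, k))
        = (S (a, i) (b, j) * T (c, j) (a, k)) • Y b c := by
      intro b c j
      rw [mul_assoc, ← Algebra.commutes, ← Algebra.smul_def, ← Algebra.smul_def, smul_smul]
    simp only [h2]
    rw [Finset.sum_congr rfl (fun c _ => Finset.sum_comm), Finset.sum_comm]
  simp only [auxPtr, h1, Finset.smul_sum, smul_smul]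
  rw [Finset.sum_comm, Finset.sum_congr rfl (fun b _ => Finset.sum_comm)]
  simp only [← Finset.sum_smul, hST]
  rw [aux_trq, Matrix.diagonal_apply]
  by_cases hik : i = k
  · simp [hik, ite_smul]
  · simp [hik]

/-- If `S M₁ T L₂ = L₂ M₁` with `T S = 1`, the quantum traces of powers commute with `L`. -/
lemma aux_commute (q : ℂ) (S T : Matrix (Fin n × Fin n) (Fin n × Fin n) ℂ)
    (hST : ∀ i k b c : Fin n, ∑ a : Fin n, ∑ j : Fin n,
      q ^ ((n : ℤ) - 1 - 2 * (a : ℤ)) * (S (a, i) (b, j) * T (c, j) (a, k)) =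
      if b = c ∧ i = k then q ^ ((n : ℤ) - 1 - 2 * (b : ℤ)) else 0)
    (hinv : S * T = 1)
    (M L : Matrix (Fin n) (Fin n) A)
    (h : leg1 M * (T.map (algebraMap ℂ A) * leg2 L) = T.map (algebraMap ℂ A) * leg2 L * leg1 M)
    (m : ℕ) (i k : Fin n) : Commute (trq q (M ^ m)) (L i k) := by
  have hinv' : S.map (algebraMap ℂ A) * T.map (algebraMap ℂ A) = 1 := by
    rw [← Matrix.map_mul, hinv, Matrix.map_one] <;> simp
  have h1 : (leg1 M) ^ m * (T.map (algebraMap ℂ A) * leg2 L) =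
      T.map (algebraMap ℂ A) * leg2 L * (leg1 M) ^ m := by
    have : Commute (leg1 M) (T.map (algebraMap ℂ A) * leg2 L) := h
    exact this.pow_left m
  have h2 : S.map (algebraMap ℂ A) * leg1 (M ^ m) * T.map (algebraMap ℂ A) * leg2 L =
      leg2 L * leg1 (M ^ m) := by
    rw [aux_leg1_pow]
    calc _ = S.map (algebraMap ℂ A) * ((leg1 M) ^ m * (T.map (algebraMap ℂ A) * leg2 L)) := by
          simp only [mul_assoc]
      _ = (S.map (algebraMap ℂ A) * T.map (algebraMap ℂ A)) * (leg2 L * (leg1 M) ^ m) := by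
          rw [h1]; simp only [mul_assoc]
      _ = _ := by rw [hinv', one_mul]
  have h3 := congrFun (congrFun (congrArg (auxPtr q) h2) i) k
  rw [aux_ptr_mul_leg2, aux_ptr_conj q S T hST, aux_ptr_leg2_leg1, Matrix.diagonal_mul] at h3
  exact h3

/-- `L₁ X₂`-type exchange relations pass to the quotient `M = L⁻ (L⁺)⁻¹`. -/
lemma aux_exchange {B : Type*} [Monoid B] (X P Pi N Z : B) (hP1 : P * Pi = 1) (hP2 : Pi * P = 1)
    (hP : P * Z = X * P) (hN : N * Z = X * N) : (N * Pi) * X = X * (N * Pi) := by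
  calc N * Pi * X = N * Pi * (X * P) * Pi := by
        rw [mul_assoc (N * Pi), mul_assoc X, hP1, mul_one]
    _ = N * (Pi * P) * Z * Pi := by rw [← hP]; simp only [mul_assoc]
    _ = X * (N * Pi) := by rw [hP2, mul_one, hN, mul_assoc]

lemma aux_leg1_swap (L : Matrix (Fin n) (Fin n) A) :
    (leg1 L).submatrix Prod.swap Prod.swap = leg2 L := by
  ext ⟨i, j⟩ ⟨k, l⟩
  simp [leg1, leg2]

lemma aux_leg2_swap (L : Matrix (Fin n) (Fin n) A) :
    (leg2 L).submatrix Prod.swap Prod.swap = leg1 L := by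
  ext ⟨i, j⟩ ⟨k, l⟩
  simp [leg1, leg2]

lemma aux_R_swap (q : ℂ) :
    (Rmat q n).submatrix Prod.swap Prod.swap = (Rmat q n)ᵀ := by
  ext ⟨i, j⟩ ⟨k, l⟩
  simp only [Rmat, Matrix.submatrix_apply, Matrix.transpose_apply, Prod.swap, Prod.mk.injEq]
  grind

lemma aux_swap_mul (X Y : Matrix (Fin n × Fin n) (Fin n × Fin n) A) :
    (X * Y).submatrix Prod.swap Prod.swap =
      X.submatrix Prod.swap Prod.swap * Y.submatrix Prod.swap Prod.swap :=
  Matrix.submatrix_mul X Y _ _ _ Prod.swap_bijective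

/-- Exchange relation with the legs swapped. -/
lemma aux_rel_swap (q : ℂ) (L L' : Matrix (Fin n) (Fin n) A)
    (h : (Rmat q n).map (algebraMap ℂ A) * leg1 L * leg2 L' =
      leg2 L' * leg1 L * (Rmat q n).map (algebraMap ℂ A)) :
    (Rmat q n)ᵀ.map (algebraMap ℂ A) * leg2 L * leg1 L' =
      leg1 L' * leg2 L * (Rmat q n)ᵀ.map (algebraMap ℂ A) := by
  have h' := congrArg (fun X => X.submatrix Prod.swap Prod.swap) h
  simp only [aux_swap_mul, aux_leg1_swap, aux_leg2_swap, Matrix.submatrix_map, aux_R_swap] at h'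
  exact h'

/-- Exchange relation with the inverse `R`-matrix. -/
lemma aux_rel_inv (q : ℂ) (hq0 : q ≠ 0) (L L' : Matrix (Fin n) (Fin n) A)
    (h : (Rmat q n).map (algebraMap ℂ A) * leg1 L * leg2 L' =
      leg2 L' * leg1 L * (Rmat q n).map (algebraMap ℂ A)) :
    leg1 L * (leg2 L' * (Rmat q⁻¹ n).map (algebraMap ℂ A)) =
      (Rmat q⁻¹ n).map (algebraMap ℂ A) * leg2 L' * leg1 L := by
  have e1 : (Rmat q n).map (algebraMap ℂ A) * (Rmat q⁻¹ n).map (algebraMap ℂ A) = 1 := by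
    rw [← Matrix.map_mul, aux_Rinv q hq0, Matrix.map_one] <;> simp
  have e2 : (Rmat q⁻¹ n).map (algebraMap ℂ A) * (Rmat q n).map (algebraMap ℂ A) = 1 := by
    have := aux_Rinv q⁻¹ (inv_ne_zero hq0) n
    rw [inv_inv] at this
    rw [← Matrix.map_mul, this, Matrix.map_one] <;> simp
  calc _ = ((Rmat q⁻¹ n).map (algebraMap ℂ A) * (Rmat q n).map (algebraMap ℂ A)) *
        (leg1 L * (leg2 L' * (Rmat q⁻¹ n).map (algebraMap ℂ A))) := by rw [e2, one_mul]
    _ = (Rmat q⁻¹ n).map (algebraMap ℂ A) * ((Rmat q n).map (algebraMap ℂ A) *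
        leg1 L * leg2 L') * (Rmat q⁻¹ n).map (algebraMap ℂ A) := by simp only [mul_assoc]
    _ = (Rmat q⁻¹ n).map (algebraMap ℂ A) * leg2 L' * leg1 L * ((Rmat q n).map (algebraMap ℂ A) *
        (Rmat q⁻¹ n).map (algebraMap ℂ A)) := by rw [h]; simp only [mul_assoc]
    _ = _ := by rw [e1, mul_one]

end generic

lemma aux_map_R (q : ℂ) (n : ℕ) :
    (RcGL q n).map (RingQuot.mkAlgHom ℂ (relGL q n)) = (Rmat q n).map (algebraMap ℂ (UqGL q n)) := by
  ext v w
  simp [RcGL]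

lemma aux_map_leg1 (q : ℂ) (n : ℕ) (p : Bool) :
    (leg1 (gl n p)).map (RingQuot.mkAlgHom ℂ (relGL q n)) = leg1 (LM q n p) := by
  ext v w
  simp only [leg1, Matrix.map_apply, LM, lG]
  split_ifs <;> simp

lemma aux_map_leg2 (q : ℂ) (n : ℕ) (p : Bool) :
    (leg2 (gl n p)).map (RingQuot.mkAlgHom ℂ (relGL q n)) = leg2 (LM q n p) := by
  ext v w
  simp only [leg2, Matrix.map_apply, LM, lG]
  split_ifs <;> simp

lemma aux_rel_of (q : ℂ) (n : ℕ) (p p' : Bool)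
    (h : ∀ v w, relGL q n ((RcGL q n * leg1 (gl n p) * leg2 (gl n p')) v w)
        ((leg2 (gl n p') * leg1 (gl n p) * RcGL q n) v w)) :
    (Rmat q n).map (algebraMap ℂ (UqGL q n)) * leg1 (LM q n p) * leg2 (LM q n p') =
      leg2 (LM q n p') * leg1 (LM q n p) * (Rmat q n).map (algebraMap ℂ (UqGL q n)) := by
  have h1 : (RcGL q n * leg1 (gl n p) * leg2 (gl n p')).map (RingQuot.mkAlgHom ℂ (relGL q n)) =
      (leg2 (gl n p') * leg1 (gl n p) * RcGL q n).map (RingQuot.mkAlgHom ℂ (relGL q n)) := by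
    ext v w
    exact RingQuot.mkAlgHom_rel ℂ (h v w)
  simpa only [Matrix.map_mul, aux_map_R, aux_map_leg1, aux_map_leg2] using h1

lemma aux_rel_same (q : ℂ) (n : ℕ) (p : Bool) :
    (Rmat q n).map (algebraMap ℂ (UqGL q n)) * leg1 (LM q n p) * leg2 (LM q n p) =
      leg2 (LM q n p) * leg1 (LM q n p) * (Rmat q n).map (algebraMap ℂ (UqGL q n)) :=
  aux_rel_of q n p p (fun v w => relGL.rll p v w)

lemma aux_rel_pm (q : ℂ) (n : ℕ) :
    (Rmat q n).map (algebraMap ℂ (UqGL q n)) * leg1 (LM q n true) * leg2 (LM q n false) =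
      leg2 (LM q n false) * leg1 (LM q n true) * (Rmat q n).map (algebraMap ℂ (UqGL q n)) :=
  aux_rel_of q n true false (fun v w => relGL.rll_pm v w)

lemma aux_main (n : ℕ) (q : ℂ) (hq0 : q ≠ 0)
    (Lpinv : Matrix (Fin n) (Fin n) (UqGL q n))
    (hLp1 : LM q n true * Lpinv = 1) (hLp2 : Lpinv * LM q n true = 1)
    (m : ℕ) (p : Bool) (i k : Fin n) :
    Commute (trq q ((LM q n false * Lpinv) ^ m)) (lG q n p i k) := by
  have e1 : leg1 (LM q n true) * leg1 Lpinv = 1 := by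
    rw [← aux_leg1_mul, hLp1, aux_leg1_one]
  have e2 : leg1 Lpinv * leg1 (LM q n true) = 1 := by
    rw [← aux_leg1_mul, hLp2, aux_leg1_one]
  cases p with
  | false =>
    refine aux_commute q (Rmat q n) (Rmat q⁻¹ n) (aux_scalar q hq0 n ((n : ℤ) - 1))
      (aux_Rinv q hq0 n) (LM q n false * Lpinv) (LM q n false) ?_ m i k
    rw [aux_leg1_mul]
    exact aux_exchange _ _ _ _ _ e1 e2 (aux_rel_inv q hq0 _ _ (aux_rel_pm q n))
      (aux_rel_inv q hq0 _ _ (aux_rel_same q n false))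
  | true =>
    refine aux_commute q (Rmat q⁻¹ n)ᵀ (Rmat q n)ᵀ ?_ ?_
      (LM q n false * Lpinv) (LM q n true) ?_ m i k
    · intro i k b c
      have h := aux_scalar q hq0 n ((n : ℤ) - 1) k i c b
      simp only [Matrix.transpose_apply]
      simp only [mul_comm (Rmat q⁻¹ n _ _)]
      rw [h]
      by_cases hc : b = c
      · subst hc
        simp [eq_comm]
      · have : ¬ c = b := fun h => hc h.symm
        simp [hc, this]
    · rw [← Matrix.transpose_mul, aux_Rinv q hq0, Matrix.transpose_one]
    · rw [aux_leg1_mul]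
      refine aux_exchange _ _ _ _ (leg2 (LM q n true) * (Rmat q n)ᵀ.map (algebraMap ℂ (UqGL q n))) e1 e2 ?_ ?_
      · rw [← mul_assoc]
        exact (aux_rel_swap q _ _ (aux_rel_same q n true)).symm
      · rw [← mul_assoc]
        exact (aux_rel_swap q _ _ (aux_rel_pm q n)).symm

/-- For every `m ≥ 1` the quantum Gelfand invariant
`tr_q M^m = tr(D·M^m)`, `M = L⁻(L⁺)⁻¹`, is central in `U_q(gl_n)`. -/
theorem stmt_19 (n : ℕ) (hn : 1 ≤ n) (q : ℂ) (hq0 : q ≠ 0)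
    (hq : ∀ k : ℕ, k ≠ 0 → q ^ k ≠ 1)
    (Lpinv : Matrix (Fin n) (Fin n) (UqGL q n))
    (hLp1 : LM q n true * Lpinv = 1) (hLp2 : Lpinv * LM q n true = 1)
    (m : ℕ) (hm : 1 ≤ m) (x : UqGL q n) :
    Commute (trq q ((LM q n false * Lpinv) ^ m)) x := by
  obtain ⟨y, rfl⟩ := RingQuot.mkAlgHom_surjective ℂ (relGL q n) x
  induction y using FreeAlgebra.induction with
  | grade0 r =>
    rw [AlgHom.commutes]
    exact (Algebra.commutes r _).symm
  | grade1 g =>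
    obtain ⟨p, i, k⟩ := g
    exact aux_main n q hq0 Lpinv hLp1 hLp2 m p i k
  | mul a b ha hb =>
    rw [map_mul]
    exact ha.mul_right hb
  | add a b ha hb =>
    rw [map_add]
    exact ha.add_right hb
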